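/- For every θ ∈ [1/4, 1/2], the function x ↦ R_θ(x) is convex on the interval [0, 1/θ). Consequently, since R_θ(0) = 1, for every ν with 0 < ν < 1/θ and every x with 0 ≤ x ≤ ν one has R_θ(x) ≤ 1 + ((R_θ(ν) − 1)/ν)·x. -/

import Mathlib

/-- The DIRK stability function, restricted to real arguments. -/
noncomputable def Rre (θ x : ℝ) : ℝ :=
  (1 + (1 - 2*θ)*x + (1/2 - 2*θ + θ^2)*x^2) / (1 - θ*x)^2

/-! `R_θ'' x = ((1 - θ x) + 3 (1 - 2 θ) θ x) / (1 - θ x) ^ 4`, and for `0 < θ ≤ 1/2` and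
`0 ≤ θ x < 1` both summands of the numerator are nonnegative. -/

theorem le_chord_of_convexOn {𝕜 : Type*} [Field 𝕜] [LinearOrder 𝕜] [IsStrictOrderedRing 𝕜]
    {s : Set 𝕜} {f : 𝕜 → 𝕜} (hf : ConvexOn 𝕜 s f) {a b x : 𝕜} (ha : a ∈ s) (hb : b ∈ s)
    (hax : a ≤ x) (hxb : x ≤ b) :
    f x ≤ f a + (f b - f a) / (b - a) * (x - a) := by
  obtain rfl | hax := hax.eq_or_lt
  · simp
  · have hx : x ∈ s := hf.1.ordConnected.out ha hb ⟨hax.le, hxb⟩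
    have secant_le : (f x - f a) / (x - a) ≤ (f b - f a) / (b - a) :=
      hf.secant_mono ha hx hb hax.ne' (hax.trans_le hxb).ne' hxb
    rwa [div_le_iff₀ (sub_pos.2 hax), sub_le_iff_le_add'] at secant_le

theorem hasDerivAt_div_one_sub_mul_pow {𝕜 : Type*} [NontriviallyNormedField 𝕜] {f : 𝕜 → 𝕜}
    {f' a x : 𝕜} (n : ℕ) (hf : HasDerivAt f f' x) (hx : 1 - a * x ≠ 0) :
    HasDerivAt (fun y ↦ f y / (1 - a * y) ^ n)
      ((f' * (1 - a * x) + n * a * f x) / (1 - a * x) ^ (n + 1)) x := by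
  have hpow : HasDerivAt (fun y ↦ (1 - a * y) ^ n) (n * (1 - a * x) ^ (n - 1) * -a) x := by
    simpa using (((hasDerivAt_id x).const_mul a).const_sub 1).fun_pow n
  refine (hf.fun_div hpow (pow_ne_zero n hx)).congr_deriv ?_
  cases n with
  | zero => field_simp; simp
  | succ n => simp only [Nat.add_sub_cancel]; field_simp; ring

theorem hasDerivAt_Rre {θ x : ℝ} (hx : 1 - θ * x ≠ 0) :
    HasDerivAt (Rre θ) ((1 - (3 * θ - 1) * x) / (1 - θ * x) ^ 3) x := by
  have hnum : HasDerivAt (fun y ↦ 1 + (1 - 2 * θ) * y + (1 / 2 - 2 * θ + θ ^ 2) * y ^ 2)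
      (1 - 2 * θ + (1 / 2 - 2 * θ + θ ^ 2) * (2 * x)) x := by
    simpa using (((hasDerivAt_id x).const_mul (1 - 2 * θ)).const_add 1).fun_add
      (((hasDerivAt_id x).fun_pow 2).const_mul (1 / 2 - 2 * θ + θ ^ 2))
  refine (hasDerivAt_div_one_sub_mul_pow 2 hnum hx).congr_deriv ?_
  congr 1
  push_cast
  ring

theorem hasDerivAt_deriv_Rre {θ x : ℝ} (hx : 1 - θ * x ≠ 0) :
    HasDerivAt (fun y ↦ (1 - (3 * θ - 1) * y) / (1 - θ * y) ^ 3)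
      (((1 - θ * x) + 3 * (1 - 2 * θ) * (θ * x)) / (1 - θ * x) ^ 4) x := by
  have hnum : HasDerivAt (fun y ↦ 1 - (3 * θ - 1) * y) (-(3 * θ - 1)) x := by
    simpa using ((hasDerivAt_id x).const_mul (3 * θ - 1)).const_sub 1
  refine (hasDerivAt_div_one_sub_mul_pow 3 hnum hx).congr_deriv ?_
  congr 1
  push_cast
  ring

theorem convexOn_Rre {θ : ℝ} (hθ : 0 < θ) (hθ' : θ ≤ 1 / 2) :
    ConvexOn ℝ (Set.Ico 0 (1 / θ)) (Rre θ) := by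
  have one_sub_pos {x : ℝ} (hx : x ∈ Set.Ico 0 (1 / θ)) : 0 < 1 - θ * x :=
    sub_pos.2 ((lt_div_iff₀' hθ).1 hx.2)
  refine convexOn_of_hasDerivWithinAt2_nonneg (convex_Ico 0 (1 / θ))
    (fun x hx ↦ (hasDerivAt_Rre (one_sub_pos hx).ne').continuousAt.continuousWithinAt)
    (fun x hx ↦ (hasDerivAt_Rre (one_sub_pos (interior_subset hx)).ne').hasDerivWithinAt)
    (fun x hx ↦ (hasDerivAt_deriv_Rre (one_sub_pos (interior_subset hx)).ne').hasDerivWithinAt)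
    fun x hx ↦ ?_
  have hden : 0 < 1 - θ * x := one_sub_pos (interior_subset hx)
  have hx₀ : 0 ≤ x := (interior_subset hx).1
  have hcoeff : 0 ≤ 1 - 2 * θ := by linarith
  positivity

theorem Rre_zero (θ : ℝ) : Rre θ 0 = 1 := by
  simp [Rre]

theorem Rtheta_convex_general {θ : ℝ} (hθ : 0 < θ) (hθ' : θ ≤ 1 / 2) :
    ConvexOn ℝ (Set.Ico (0 : ℝ) (1/θ)) (Rre θ) ∧
    (∀ ν : ℝ, 0 < ν → ν < 1/θ → ∀ x : ℝ, 0 ≤ x → x ≤ ν →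
      Rre θ x ≤ 1 + ((Rre θ ν - 1)/ν) * x) := by
  have hconv := convexOn_Rre hθ hθ'
  refine ⟨hconv, fun ν hν hνθ x hx hxν ↦ ?_⟩
  simpa only [Rre_zero, sub_zero] using
    le_chord_of_convexOn hconv ⟨le_rfl, one_div_pos.2 hθ⟩ ⟨hν.le, hνθ⟩ hx hxν

/-- For every θ ∈ [1/4, 1/2] the function x ↦ R_θ(x) is convex on
[0, 1/θ); consequently, since R_θ(0) = 1, for every ν with 0 < ν < 1/θ and every
x with 0 ≤ x ≤ ν one has R_θ(x) ≤ 1 + ((R_θ(ν) − 1)/ν)·x. -/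
theorem Rtheta_convex (θ : ℝ) (hθ : θ ∈ Set.Icc (1/4 : ℝ) (1/2)) :
    ConvexOn ℝ (Set.Ico (0 : ℝ) (1/θ)) (Rre θ) ∧
    (∀ ν : ℝ, 0 < ν → ν < 1/θ → ∀ x : ℝ, 0 ≤ x → x ≤ ν →
      Rre θ x ≤ 1 + ((Rre θ ν - 1)/ν) * x) :=
  Rtheta_convex_general (by linarith [hθ.1]) hθ.2
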